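/- Smoothing bound for the max-relative entropy: Let ρ, σ be states on ℂ^d, let λ ∈ ℝ with λ ≤ D_max(ρ‖σ), and set ε := Tr[(ρ − 2^λ σ)₊]. Then D_max^{√ε}(ρ‖σ) ≤ λ − log(1 − ε) in the extended reals. -/

import Mathlib

open scoped Kronecker ComplexOrder

noncomputable section

namespace QCD

attribute [local instance] Classical.propDecidable

variable {n m : Type} [Fintype n] [DecidableEq n] [Fintype m] [DecidableEq m]

/-- The real part of the trace of a complex matrix. -/
def rtr (A : Matrix n n ℂ) : ℝ := (A.trace).re

/-- A quantum state: positive semidefinite with trace one. -/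
def IsState (ρ : Matrix n n ℂ) : Prop := ρ.PosSemidef ∧ ρ.trace = 1

/-- Loewner order: `A ≤ B` iff `B - A` is positive semidefinite. -/
def loewnerLE (A B : Matrix n n ℂ) : Prop := (B - A).PosSemidef

/-- Support containment (for PSD matrices): `ker σ ⊆ ker ρ`. -/
def SuppLE (ρ σ : Matrix n n ℂ) : Prop := ∀ v : n → ℂ, σ.mulVec v = 0 → ρ.mulVec v = 0

/-- Functional calculus for Hermitian matrices (junk value `0` otherwise). -/
def matFun (f : ℝ → ℝ) (A : Matrix n n ℂ) : Matrix n n ℂ :=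
  if hA : A.IsHermitian then
    (hA.eigenvectorUnitary : Matrix n n ℂ) *
      Matrix.diagonal (fun i => (f (hA.eigenvalues i) : ℂ)) *
      (star (hA.eigenvectorUnitary : Matrix n n ℂ))
  else 0

/-- Matrix square root via functional calculus. -/
def msqrt (A : Matrix n n ℂ) : Matrix n n ℂ := matFun Real.sqrt A

/-- Matrix real power taken on the support (`0 ^ t := 0`). -/
def mpow (A : Matrix n n ℂ) (t : ℝ) : Matrix n n ℂ :=
  matFun (fun x => if x = 0 then 0 else x ^ t) A

/-- Matrix base-2 logarithm on the support. -/
def mlog (A : Matrix n n ℂ) : Matrix n n ℂ := matFun (Real.logb 2) A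

/-- Positive part of a Hermitian matrix. -/
def mposPart (A : Matrix n n ℂ) : Matrix n n ℂ := matFun (fun x => max x 0) A

/-- Trace norm. -/
def traceNorm (A : Matrix n m ℂ) : ℝ := rtr (msqrt (A.conjTranspose * A))

/-- Base-2 logarithm as an extended real (`⊥` on nonpositive input). -/
def elog (x : ℝ) : EReal := if x ≤ 0 then ⊥ else ((Real.logb 2 x : ℝ) : EReal)

/-- Base-2 logarithm of an extended real. -/
def elogE (x : EReal) : EReal := if x = ⊤ then ⊤ else elog x.toReal

/-- `2 ^ x` for an extended real `x`. -/
def epow2 (x : EReal) : EReal :=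
  if x = ⊤ then ⊤ else if x = ⊥ then 0 else ((((2:ℝ) ^ x.toReal : ℝ)) : EReal)

/-- Umegaki relative entropy (base 2), `⊤` if the support condition fails. -/
def relEntropy (ρ σ : Matrix n n ℂ) : EReal :=
  if SuppLE ρ σ then ((rtr (ρ * (mlog ρ - mlog σ)) : ℝ) : EReal) else ⊤

/-- Petz–Rényi divergence (base 2). -/
def petzRenyi (α : ℝ) (ρ σ : Matrix n n ℂ) : EReal :=
  if 1 < α ∧ ¬ SuppLE ρ σ then ⊤
  else (((α - 1)⁻¹ : ℝ) : EReal) * elog (rtr (mpow ρ α * mpow σ (1 - α)))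

/-- Geometric (maximal) Rényi divergence (base 2). -/
def geomRenyi (α : ℝ) (ρ σ : Matrix n n ℂ) : EReal :=
  if SuppLE ρ σ then
    (((α - 1)⁻¹ : ℝ) : EReal) *
      elog (rtr (σ * mpow (mpow σ (-(1/2 : ℝ)) * ρ * mpow σ (-(1/2 : ℝ))) α))
  else ⊤

/-- Max-relative entropy (base 2). -/
def dMax (ρ σ : Matrix n n ℂ) : EReal :=
  sInf {x : EReal | ∃ lam : ℝ, x = (lam : EReal) ∧ loewnerLE ρ ((((2:ℝ) ^ lam : ℝ) : ℂ) • σ)}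

/-- Uhlmann fidelity. -/
def fidelity (ρ σ : Matrix n n ℂ) : ℝ := (rtr (msqrt (msqrt σ * ρ * msqrt σ))) ^ 2

/-- Sine (purified) distance. -/
def sineDist (ρ σ : Matrix n n ℂ) : ℝ := Real.sqrt (1 - fidelity ρ σ)

/-- Smoothed max-relative entropy: smoothing over states in the sine-distance ball. -/
def dMaxSmooth (δ : ℝ) (ρ σ : Matrix n n ℂ) : EReal :=
  ⨅ (ρ' : Matrix n n ℂ) (_ : IsState ρ' ∧ sineDist ρ ρ' ≤ δ), dMax ρ' σ

/-- Hypothesis testing divergence (base 2). -/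
def dH (ε : ℝ) (ρ σ : Matrix n n ℂ) : EReal :=
  - elog (sInf {x : ℝ | ∃ T : Matrix n n ℂ,
      T.PosSemidef ∧ ((1 : Matrix n n ℂ) - T).PosSemidef ∧ 1 - ε ≤ rtr (T * ρ) ∧ x = rtr (T * σ)})

/-- The quantity `c_γ(ρ‖σ)`. -/
def cGamma (γ : ℝ) (ρ σ : Matrix n n ℂ) : EReal :=
  ((γ⁻¹ : ℝ) : EReal) *
    elogE (epow2 ((γ : ℝ) * petzRenyi (1 + γ) ρ σ) +
           epow2 (((-γ : ℝ) : EReal) * petzRenyi (1 - γ) ρ σ) + 1)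

/-- Binary entropy (base 2). -/
def binEnt (x : ℝ) : ℝ := -(x * Real.logb 2 x) - (1 - x) * Real.logb 2 (1 - x)

/-- Action of `id_k ⊗ Φ` on block matrices. -/
def blockApply {k : Type} (Φ : Matrix n n ℂ →ₗ[ℂ] Matrix m m ℂ)
    (M : Matrix (k × n) (k × n) ℂ) : Matrix (k × m) (k × m) ℂ :=
  Matrix.of fun p q => Φ (Matrix.of fun a b => M (p.1, a) (q.1, b)) p.2 q.2

/-- Action of `Φ ⊗ id_k` on block matrices. -/
def blockApplyRight {k : Type} (Φ : Matrix n n ℂ →ₗ[ℂ] Matrix m m ℂ)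
    (M : Matrix (n × k) (n × k) ℂ) : Matrix (m × k) (m × k) ℂ :=
  Matrix.of fun p q => Φ (Matrix.of fun a b => M (a, p.2) (b, q.2)) p.1 q.1

/-- Quantum channel: trace preserving and completely positive. -/
def IsQChannel (Φ : Matrix n n ℂ →ₗ[ℂ] Matrix m m ℂ) : Prop :=
  (∀ M : Matrix n n ℂ, (Φ M).trace = M.trace) ∧
  (∀ k : ℕ, 1 ≤ k → ∀ M : Matrix (Fin k × n) (Fin k × n) ℂ, M.PosSemidef →
    (blockApply Φ M).PosSemidef)

/-- `id_k ⊗ Φ` as a linear map. -/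
def blockApplyL (k : Type) (Φ : Matrix n n ℂ →ₗ[ℂ] Matrix m m ℂ) :
    Matrix (k × n) (k × n) ℂ →ₗ[ℂ] Matrix (k × m) (k × m) ℂ where
  toFun := blockApply Φ
  map_add' M N := by
    ext p q
    show Φ (Matrix.of fun a b => (M + N) (p.1, a) (q.1, b)) p.2 q.2 = _
    have h : (Matrix.of fun a b => (M + N) (p.1, a) (q.1, b)) =
        (Matrix.of fun a b => M (p.1, a) (q.1, b)) +
          (Matrix.of fun a b => N (p.1, a) (q.1, b)) := rfl
    rw [h, map_add]
    rfl
  map_smul' c M := by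
    ext p q
    show Φ (Matrix.of fun a b => (c • M) (p.1, a) (q.1, b)) p.2 q.2 = _
    have h : (Matrix.of fun a b => (c • M) (p.1, a) (q.1, b)) =
        c • (Matrix.of fun a b => M (p.1, a) (q.1, b)) := rfl
    rw [h, map_smul]
    rfl

/-- `Φ ⊗ id_k` as a linear map. -/
def blockApplyRightL (k : Type) (Φ : Matrix n n ℂ →ₗ[ℂ] Matrix m m ℂ) :
    Matrix (n × k) (n × k) ℂ →ₗ[ℂ] Matrix (m × k) (m × k) ℂ where
  toFun := blockApplyRight Φ
  map_add' M N := by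
    ext p q
    show Φ (Matrix.of fun a b => (M + N) (a, p.2) (b, q.2)) p.1 q.1 = _
    have h : (Matrix.of fun a b => (M + N) (a, p.2) (b, q.2)) =
        (Matrix.of fun a b => M (a, p.2) (b, q.2)) +
          (Matrix.of fun a b => N (a, p.2) (b, q.2)) := rfl
    rw [h, map_add]
    rfl
  map_smul' c M := by
    ext p q
    show Φ (Matrix.of fun a b => (c • M) (a, p.2) (b, q.2)) p.1 q.1 = _
    have h : (Matrix.of fun a b => (c • M) (a, p.2) (b, q.2)) =
        c • (Matrix.of fun a b => M (a, p.2) (b, q.2)) := rfl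
    rw [h, map_smul]
    rfl

/-- Tensor product of two channels (Kronecker product action). -/
def tensorChannel {n₁ m₁ n₂ m₂ : Type}
    (E₁ : Matrix n₁ n₁ ℂ →ₗ[ℂ] Matrix m₁ m₁ ℂ) (E₂ : Matrix n₂ n₂ ℂ →ₗ[ℂ] Matrix m₂ m₂ ℂ) :
    Matrix (n₁ × n₂) (n₁ × n₂) ℂ →ₗ[ℂ] Matrix (m₁ × m₂) (m₁ × m₂) ℂ :=
  (blockApplyRightL m₂ E₁).comp (blockApplyL n₁ E₂)

/-- Index type for `k`-fold tensor powers. -/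
def tpow (ι : Type) : ℕ → Type
  | 0 => PUnit
  | (k+1) => tpow ι k × ι

def tpowFintype (ι : Type) [Fintype ι] : ∀ k : ℕ, Fintype (tpow ι k)
  | 0 => inferInstanceAs (Fintype PUnit)
  | (k+1) => letI := tpowFintype ι k; inferInstanceAs (Fintype (tpow ι k × ι))

instance (ι : Type) [Fintype ι] (k : ℕ) : Fintype (tpow ι k) := tpowFintype ι k

def tpowDecEq (ι : Type) [DecidableEq ι] : ∀ k : ℕ, DecidableEq (tpow ι k)
  | 0 => inferInstanceAs (DecidableEq PUnit)
  | (k+1) => letI := tpowDecEq ι k; inferInstanceAs (DecidableEq (tpow ι k × ι))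

instance (ι : Type) [DecidableEq ι] (k : ℕ) : DecidableEq (tpow ι k) := tpowDecEq ι k

/-- `k`-fold Kronecker tensor power of a matrix. -/
def tpowMat (ρ : Matrix n n ℂ) : ∀ k : ℕ, Matrix (tpow n k) (tpow n k) ℂ
  | 0 => 1
  | (k+1) => (tpowMat ρ k) ⊗ₖ ρ

/-- `k`-fold tensor power of a channel. -/
def tpowChannel (Φ : Matrix n n ℂ →ₗ[ℂ] Matrix m m ℂ) :
    ∀ k : ℕ, Matrix (tpow n k) (tpow n k) ℂ →ₗ[ℂ] Matrix (tpow m k) (tpow m k) ℂ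
  | 0 => LinearMap.id
  | (k+1) => tensorChannel (tpowChannel Φ k) Φ

/-- Channel divergence induced by a divergence `𝔇` on states:
sup over `k ≥ 1` and input states `ν` on `ℂ^k ⊗ ℂ^d`. -/
def chDiv (𝔇 : ∀ (p : Type) [Fintype p] [DecidableEq p], Matrix p p ℂ → Matrix p p ℂ → EReal)
    (E F : Matrix n n ℂ →ₗ[ℂ] Matrix m m ℂ) : EReal :=
  ⨆ (k : ℕ) (_ : 1 ≤ k) (ν : Matrix (Fin k × n) (Fin k × n) ℂ) (_ : IsState ν),
    𝔇 (Fin k × m) (blockApply E ν) (blockApply F ν)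

/-- The geometric Rényi divergence as a divergence family. -/
def geomD (α : ℝ) : ∀ (p : Type) [Fintype p] [DecidableEq p],
    Matrix p p ℂ → Matrix p p ℂ → EReal :=
  fun _ _ _ => geomRenyi α

/-- The Umegaki relative entropy as a divergence family. -/
def relD : ∀ (p : Type) [Fintype p] [DecidableEq p],
    Matrix p p ℂ → Matrix p p ℂ → EReal :=
  fun _ _ _ => relEntropy

/-- The hypothesis testing divergence as a divergence family. -/
def dHD (ε : ℝ) : ∀ (p : Type) [Fintype p] [DecidableEq p],
    Matrix p p ℂ → Matrix p p ℂ → EReal :=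
  fun _ _ _ => dH ε

/-- Regularized channel relative entropy. -/
def regRelEntropy (E F : Matrix n n ℂ →ₗ[ℂ] Matrix m m ℂ) : EReal :=
  ⨆ (k : ℕ) (_ : 1 ≤ k),
    (((k : ℝ)⁻¹ : ℝ) : EReal) * chDiv relD (tpowChannel E k) (tpowChannel F k)

end QCD

namespace QCD

section Helpers

open Matrix

variable {n : Type} [Fintype n] [DecidableEq n]

lemma matFun_of {A : Matrix n n ℂ} (hA : A.IsHermitian) (f : ℝ → ℝ) :
    matFun f A = (hA.eigenvectorUnitary : Matrix n n ℂ) *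
      Matrix.diagonal (fun i => (f (hA.eigenvalues i) : ℂ)) *
      (star (hA.eigenvectorUnitary : Matrix n n ℂ)) := by
  unfold matFun
  rw [dif_pos hA]

lemma matFun_id {A : Matrix n n ℂ} (hA : A.IsHermitian) : matFun (fun x => x) A = A := by
  rw [matFun_of hA]
  conv_rhs => rw [hA.spectral_theorem]
  rw [Unitary.conjStarAlgAut_apply]
  rfl

lemma matFun_one {A : Matrix n n ℂ} (hA : A.IsHermitian) : matFun (fun _ => 1) A = 1 := by
  rw [matFun_of hA]
  have h : (Matrix.diagonal (fun _ : n => ((1:ℝ):ℂ))) = 1 := by simp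
  rw [h, mul_one]
  exact Unitary.coe_mul_star_self _

lemma matFun_mul {A : Matrix n n ℂ} (hA : A.IsHermitian) (f g : ℝ → ℝ) :
    matFun f A * matFun g A = matFun (fun x => f x * g x) A := by
  rw [matFun_of hA, matFun_of hA, matFun_of hA]
  have h : star (hA.eigenvectorUnitary : Matrix n n ℂ) * (hA.eigenvectorUnitary : Matrix n n ℂ) = 1 :=
    Unitary.coe_star_mul_self _
  have h2 : (Matrix.diagonal (fun i => ((f (hA.eigenvalues i) * g (hA.eigenvalues i) : ℝ) : ℂ))) =
      Matrix.diagonal (fun i => (f (hA.eigenvalues i) : ℂ)) *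
      Matrix.diagonal (fun i => (g (hA.eigenvalues i) : ℂ)) := by
    rw [Matrix.diagonal_mul_diagonal]; simp
  rw [h2]
  simp only [mul_assoc]
  rw [← mul_assoc (star _) (hA.eigenvectorUnitary : Matrix n n ℂ), h, one_mul]

lemma matFun_sub {A : Matrix n n ℂ} (hA : A.IsHermitian) (f g : ℝ → ℝ) :
    matFun f A - matFun g A = matFun (fun x => f x - g x) A := by
  rw [matFun_of hA, matFun_of hA, matFun_of hA, ← sub_mul, ← mul_sub, Matrix.diagonal_sub]
  simp

lemma matFun_congr {A : Matrix n n ℂ} (hA : A.IsHermitian) {f g : ℝ → ℝ}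
    (h : ∀ i, f (hA.eigenvalues i) = g (hA.eigenvalues i)) : matFun f A = matFun g A := by
  rw [matFun_of hA, matFun_of hA]
  simp only [h]

lemma matFun_psd {A : Matrix n n ℂ} (hA : A.IsHermitian) {f : ℝ → ℝ}
    (h : ∀ i, 0 ≤ f (hA.eigenvalues i)) : (matFun f A).PosSemidef := by
  rw [matFun_of hA]
  refine Matrix.PosSemidef.mul_mul_conjTranspose_same (Matrix.PosSemidef.diagonal ?_) _
  intro i
  simpa using h i

lemma trace_matFun {A : Matrix n n ℂ} (hA : A.IsHermitian) (f : ℝ → ℝ) :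
    rtr (matFun f A) = (A.charpoly.roots.map (fun z => f z.re)).sum := by
  have h : star (hA.eigenvectorUnitary : Matrix n n ℂ) * (hA.eigenvectorUnitary : Matrix n n ℂ) = 1 :=
    Unitary.coe_star_mul_self _
  rw [matFun_of hA, rtr, Matrix.trace_mul_comm, ← mul_assoc, h, one_mul, Matrix.trace_diagonal,
    hA.roots_charpoly_eq_eigenvalues]
  simp [Multiset.map_map]

lemma msqrt_psd {A : Matrix n n ℂ} (hA : A.PosSemidef) : (msqrt A).PosSemidef :=
  matFun_psd hA.1 fun _ => Real.sqrt_nonneg _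

lemma msqrt_mul {A : Matrix n n ℂ} (hA : A.PosSemidef) : msqrt A * msqrt A = A := by
  unfold msqrt
  rw [matFun_mul hA.1]
  conv_rhs => rw [← matFun_id hA.1]
  exact matFun_congr hA.1 fun i => Real.mul_self_sqrt (hA.eigenvalues_nonneg i)

lemma psd_of_sq_le {A B : Matrix n n ℂ} (hA : A.PosSemidef) (hB : B.PosSemidef)
    (h : (B * B - A * A).PosSemidef) : (B - A).PosSemidef := by
  have hD : (B - A).IsHermitian := hB.1.sub hA.1
  rw [hD.posSemidef_iff_eigenvalues_nonneg]
  intro i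
  show 0 ≤ hD.eigenvalues i
  by_contra hlt
  push Not at hlt
  set t := hD.eigenvalues i
  set v : n → ℂ := ⇑(hD.eigenvectorBasis i) with hv
  have hDv : (B - A) *ᵥ v = (t : ℂ) • v := by
    have := hD.mulVec_eigenvectorBasis i
    simpa using this
  have hvD : star v ᵥ* (B - A) = (t : ℂ) • star v := by
    have := congrArg star hDv
    rw [Matrix.star_mulVec, hD.eq] at this
    simpa using this
  have hv0 : v ≠ 0 := by
    intro h0
    have h1 := hD.eigenvectorBasis.orthonormal.1 i
    have h2 : hD.eigenvectorBasis i = 0 := by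
      ext j; exact congrFun h0 j
    rw [h2] at h1
    simp at h1
  have key : star v ⬝ᵥ ((B * B - A * A) *ᵥ v) =
      (t : ℂ) * (star v ⬝ᵥ (B *ᵥ v) + star v ⬝ᵥ (A *ᵥ v)) := by
    have e : B * B - A * A = B * (B - A) + (B - A) * A := by noncomm_ring
    rw [e, Matrix.add_mulVec, dotProduct_add, ← Matrix.mulVec_mulVec, hDv, Matrix.mulVec_smul,
      dotProduct_smul, ← Matrix.mulVec_mulVec, Matrix.dotProduct_mulVec (star v) (B - A), hvD,
      smul_dotProduct]
    simp [mul_add]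
  have h1 := h.dotProduct_mulVec_nonneg v
  have hb := hB.dotProduct_mulVec_nonneg v
  have ha := hA.dotProduct_mulVec_nonneg v
  have hd : star v ⬝ᵥ (B *ᵥ v) - star v ⬝ᵥ (A *ᵥ v) = (t : ℂ) * (star v ⬝ᵥ v) := by
    rw [← dotProduct_sub, ← Matrix.sub_mulVec, hDv, dotProduct_smul]
    simp
  rw [key] at h1
  set b := star v ⬝ᵥ (B *ᵥ v)
  set a := star v ⬝ᵥ (A *ᵥ v)
  have hvv : 0 < (star v ⬝ᵥ v).re := by
    have : 0 < star v ⬝ᵥ v := dotProduct_star_self_pos_iff.mpr hv0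
    exact (Complex.lt_def.mp this).1
  have h1' := (Complex.le_def.mp h1).1
  have hb' := (Complex.le_def.mp hb).1
  have ha' := (Complex.le_def.mp ha).1
  have hd' := congrArg Complex.re hd
  rw [Complex.re_ofReal_mul] at h1' hd'
  simp only [Complex.zero_re, Complex.add_re, Complex.sub_re] at h1' hb' ha' hd'
  nlinarith [mul_neg_of_neg_of_pos hlt hvv]

lemma psd_antisymm {A : Matrix n n ℂ} (h1 : A.PosSemidef) (h2 : (-A).PosSemidef) : A = 0 := by
  rw [← h1.trace_eq_zero_iff]
  have a := h1.trace_nonneg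
  have b := h2.trace_nonneg
  rw [Matrix.trace_neg] at b
  exact le_antisymm (neg_nonneg.mp b) a

lemma msqrt_unique {A M : Matrix n n ℂ} (hM : M.PosSemidef) (h : M * M = A) : msqrt A = M := by
  have hA : A.PosSemidef := by
    rw [← h]
    have := Matrix.posSemidef_conjTranspose_mul_self M
    rwa [hM.1.eq] at this
  have h1 : (M - msqrt A).PosSemidef := psd_of_sq_le (msqrt_psd hA) hM (by
    rw [h, msqrt_mul hA, sub_self]; exact Matrix.PosSemidef.zero)
  have h2 : (msqrt A - M).PosSemidef := psd_of_sq_le hM (msqrt_psd hA) (by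
    rw [h, msqrt_mul hA, sub_self]; exact Matrix.PosSemidef.zero)
  have := psd_antisymm h2 (by rwa [neg_sub])
  exact sub_eq_zero.mp this

lemma psd_kernel {S T N : Matrix n n ℂ} (hS : S.PosSemidef) (hST : (T - S).PosSemidef)
    (h : T * N = 0) : S * N = 0 := by
  have h1 : (Nᴴ * S * N).PosSemidef := hS.conjTranspose_mul_mul_same N
  have h2 : (Nᴴ * (T - S) * N).PosSemidef := hST.conjTranspose_mul_mul_same N
  have e : Nᴴ * (T - S) * N = -(Nᴴ * S * N) := by
    rw [mul_sub, sub_mul, mul_assoc Nᴴ T, h]; simp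
  rw [e] at h2
  have h3 := psd_antisymm h1 h2
  have h4 : (msqrt S * N)ᴴ * (msqrt S * N) = 0 := by
    rw [Matrix.conjTranspose_mul, (msqrt_psd hS).1.eq, ← h3]
    conv_rhs => rw [← msqrt_mul hS]
    simp only [mul_assoc]
  rw [Matrix.conjTranspose_mul_self_eq_zero] at h4
  rw [← msqrt_mul hS, mul_assoc, h4, mul_zero]

lemma psd_sandwich {A B : Matrix n n ℂ} (hA : A.PosSemidef) (hB : B.PosSemidef) :
    (A * B * A).PosSemidef := by
  have := hB.mul_mul_conjTranspose_same A
  rwa [hA.1.eq] at this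

lemma rtr_nonneg {A : Matrix n n ℂ} (hA : A.PosSemidef) : 0 ≤ rtr A :=
  (Complex.le_def.mp hA.trace_nonneg).1

lemma rtr_mul_nonneg {A B : Matrix n n ℂ} (hA : A.PosSemidef) (hB : B.PosSemidef) :
    0 ≤ rtr (A * B) := by
  have h : rtr (A * B) = rtr (msqrt A * B * msqrt A) := by
    unfold rtr
    rw [Matrix.trace_mul_comm (msqrt A * B), ← mul_assoc, msqrt_mul hA]
  rw [h]
  exact rtr_nonneg (psd_sandwich (msqrt_psd hA) hB)

lemma rtr_sub (A B : Matrix n n ℂ) : rtr (A - B) = rtr A - rtr B := by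
  simp [rtr, Matrix.trace_sub]

lemma rtr_add (A B : Matrix n n ℂ) : rtr (A + B) = rtr A + rtr B := by
  simp [rtr, Matrix.trace_add]

/-- A positive contraction `G` (a geometric mean) with `G T G = S`, whenever `0 ≤ S ≤ T`. -/
lemma exists_contraction {S T : Matrix n n ℂ} (hS : S.PosSemidef) (hT : T.PosSemidef)
    (hST : (T - S).PosSemidef) :
    ∃ G : Matrix n n ℂ, G.PosSemidef ∧ (1 - G).PosSemidef ∧ G * T * G = S := by
  set R := msqrt T with hR
  set Q := matFun (fun x => (Real.sqrt x)⁻¹) T with hQ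
  set P := matFun (fun x => (Real.sqrt x)⁻¹ * Real.sqrt x) T with hP
  have hRp : R.PosSemidef := msqrt_psd hT
  have hQp : Q.PosSemidef := matFun_psd hT.1 fun i => inv_nonneg.mpr (Real.sqrt_nonneg _)
  have hRR : R * R = T := msqrt_mul hT
  have hQR : Q * R = P := matFun_mul hT.1 _ _
  have hRQ : R * Q = P := by
    rw [hR, hQ, msqrt, matFun_mul hT.1, hP]
    exact matFun_congr hT.1 fun i => mul_comm _ _
  have hPR : P * R = R := by
    rw [hP, hR, msqrt, matFun_mul hT.1]
    exact matFun_congr hT.1 fun i => inv_mul_mul_self _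
  have hRP : R * P = R := by rw [← hQR, ← mul_assoc, hRQ, hPR]
  have hPP : P * P = P := by
    nth_rewrite 1 [← hQR]
    rw [mul_assoc, hRP, hQR]
  have h1P : (1 - P).PosSemidef := by
    rw [← matFun_one hT.1, hP, matFun_sub hT.1]
    refine matFun_psd hT.1 fun i => ?_
    by_cases h : Real.sqrt (hT.1.eigenvalues i) = 0
    · simp [h]
    · simp [h]
  have hTP : T * (1 - P) = 0 := by
    rw [← hRR, mul_assoc, mul_sub, mul_one, hRP, sub_self, mul_zero]
  have hSP : S * P = S := by
    have := psd_kernel hS hST hTP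
    rw [mul_sub, mul_one, sub_eq_zero] at this
    exact this.symm
  have hPh : Pᴴ = P := by rw [← hQR, Matrix.conjTranspose_mul, hRp.1.eq, hQp.1.eq, hRQ, hQR]
  have hPS : P * S = S := by
    have := congrArg Matrix.conjTranspose hSP
    rwa [Matrix.conjTranspose_mul, hPh, hS.1.eq] at this
  have hRSR : (R * S * R).PosSemidef := psd_sandwich hRp hS
  set M := msqrt (R * S * R) with hM
  have hMp : M.PosSemidef := msqrt_psd hRSR
  have hMM : M * M = R * S * R := msqrt_mul hRSR
  have hMT : (T - M).PosSemidef := by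
    refine psd_of_sq_le hMp hT ?_
    have e : T * T - M * M = R * (T - S) * R := by
      rw [hMM, mul_sub, sub_mul, ← hRR]; noncomm_ring
    rw [e]
    exact psd_sandwich hRp hST
  have hMP : M * P = M := by
    have := psd_kernel hMp hMT hTP
    rw [mul_sub, mul_one, sub_eq_zero] at this
    exact this.symm
  refine ⟨Q * M * Q, psd_sandwich hQp hMp, ?_, ?_⟩
  · have e : 1 - Q * M * Q = (1 - P) + Q * (T - M) * Q := by
      have : Q * T * Q = P := by
        rw [← hRR, ← mul_assoc, hQR, mul_assoc, hRQ, hPP]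
      rw [mul_sub, sub_mul, this]; abel
    rw [e]
    exact h1P.add (psd_sandwich hQp hMT)
  · calc Q * M * Q * T * (Q * M * Q) = Q * (M * (Q * R) * (R * Q)) * M * Q := by
          rw [← hRR]; simp only [mul_assoc]
      _ = Q * (M * M) * Q := by rw [hQR, hRQ, hMP, hMP]; simp only [mul_assoc]
      _ = (Q * R) * S * (R * Q) := by rw [hMM]; simp only [mul_assoc]
      _ = S := by rw [hQR, hRQ, hPS, hSP]

/-- Fidelity of a state with its (normalised) image under a positive matrix. -/
lemma fidelity_sandwich {ρ G : Matrix n n ℂ} (hρ : ρ.PosSemidef) (hG : G.PosSemidef)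
    (p : ℝ) (hp : 0 < p) :
    fidelity ρ (((p⁻¹ : ℝ) : ℂ) • (G * ρ * G)) = (rtr (ρ * G)) ^ 2 / p := by
  set ρ' := ((p⁻¹ : ℝ) : ℂ) • (G * ρ * G) with hρ'
  have hpc : (0 : ℂ) ≤ ((p⁻¹ : ℝ) : ℂ) := by
    exact_mod_cast (inv_pos.mpr hp).le
  have hρ'p : ρ'.PosSemidef := (psd_sandwich hG hρ).smul hpc
  set r := msqrt ρ with hr
  set s := msqrt ρ' with hs
  have hrp : r.PosSemidef := msqrt_psd hρ
  have hsp : s.PosSemidef := msqrt_psd hρ'p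
  have hrr : r * r = ρ := msqrt_mul hρ
  have hss : s * s = ρ' := msqrt_mul hρ'p
  have hH1 : (s * ρ * s).PosSemidef := psd_sandwich hsp hρ
  have hH2 : (r * ρ' * r).PosSemidef := psd_sandwich hrp hρ'p
  have hch : (s * ρ * s).charpoly = (r * ρ' * r).charpoly := by
    have := Matrix.charpoly_mul_comm (s * r) (r * s)
    rw [← hrr, ← hss]
    simpa only [mul_assoc] using this
  have htr : rtr (msqrt (s * ρ * s)) = rtr (msqrt (r * ρ' * r)) := by
    unfold msqrt
    rw [trace_matFun hH1.1, trace_matFun hH2.1, hch]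
  have hsq : msqrt (r * ρ' * r) = (((Real.sqrt p)⁻¹ : ℝ) : ℂ) • (r * G * r) := by
    apply msqrt_unique
    · refine (psd_sandwich hrp hG).smul ?_
      exact_mod_cast inv_nonneg.mpr (Real.sqrt_nonneg _)
    · have e : (((Real.sqrt p)⁻¹ : ℝ) : ℂ) * (((Real.sqrt p)⁻¹ : ℝ) : ℂ) = ((p⁻¹ : ℝ) : ℂ) := by
        rw [← Complex.ofReal_mul, ← mul_inv, Real.mul_self_sqrt hp.le]
      rw [hρ', smul_mul_smul_comm, e, Matrix.mul_smul, Matrix.smul_mul]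
      congr 1
      rw [← hrr]; simp only [mul_assoc]
  have htr2 : rtr ((((Real.sqrt p)⁻¹ : ℝ) : ℂ) • (r * G * r)) = (Real.sqrt p)⁻¹ * rtr (ρ * G) := by
    unfold rtr
    rw [Matrix.trace_smul, smul_eq_mul, Complex.re_ofReal_mul, Matrix.trace_mul_comm, ← mul_assoc, hrr]
  unfold fidelity
  rw [← hs, htr, hsq, htr2, mul_pow, inv_pow, Real.sq_sqrt hp.le, div_eq_inv_mul]

end Helpers

/-- Smoothing bound for the max-relative entropy. -/
theorem dMaxSmooth_smoothing_bound {d : ℕ} (ρ σ : Matrix (Fin d) (Fin d) ℂ)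
    (hρ : IsState ρ) (hσ : IsState σ) (lam : ℝ) (hlam : (lam : EReal) ≤ dMax ρ σ)
    (ε : ℝ) (hε : ε = rtr (mposPart (ρ - (((2:ℝ) ^ lam : ℝ) : ℂ) • σ))) :
    dMaxSmooth (Real.sqrt ε) ρ σ ≤ (lam : EReal) - elog (1 - ε) := by
  by_cases h1 : 1 - ε ≤ 0
  · have : elog (1 - ε) = ⊥ := by unfold elog; rw [if_pos h1]
    rw [this]
    simp
  push Not at h1
  have hel : elog (1 - ε) = ((Real.logb 2 (1 - ε) : ℝ) : EReal) := by
    unfold elog; rw [if_neg (not_le.mpr h1)]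
  rw [hel, ← EReal.coe_sub]
  set μ : ℝ := (2:ℝ) ^ lam with hμ
  have hμ0 : 0 < μ := Real.rpow_pos_of_pos two_pos _
  set S := ((μ : ℝ) : ℂ) • σ with hS
  have hSp : S.PosSemidef := hσ.1.smul (by exact_mod_cast hμ0.le)
  have hD : (ρ - S).IsHermitian := hρ.1.1.sub hSp.1
  set A := mposPart (ρ - S) with hA
  have hAp : A.PosSemidef := matFun_psd hD fun i => le_max_right _ _
  have hAD : (A - (ρ - S)).PosSemidef := by
    have e : A - (ρ - S) = matFun (fun x => max x 0) (ρ - S) - matFun (fun x => x) (ρ - S) := by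
      rw [matFun_id hD]; rfl
    rw [e, matFun_sub hD]
    exact matFun_psd hD fun i => sub_nonneg.mpr (le_max_left _ _)
  have hTp : (S + A).PosSemidef := hSp.add hAp
  obtain ⟨G, hG, hG1, hGTG⟩ := exists_contraction hSp hTp (by simpa using hAp)
  have hρT : (S + A - ρ).PosSemidef := by
    have : S + A - ρ = A - (ρ - S) := by abel
    rwa [this]
  have hGG : (G - G * G).PosSemidef := by
    have : G - G * G = G * (1 - G) * G + (1 - G) * G * (1 - G) := by noncomm_ring
    rw [this]
    exact (psd_sandwich hG hG1).add (psd_sandwich hG1 hG)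
  have h1GG : (1 - G * G).PosSemidef := by
    have : 1 - G * G = (1 - G) + (G - G * G) := by abel
    rw [this]
    exact hG1.add hGG
  set p := rtr (G * ρ * G) with hp
  have hpc : p = rtr (ρ * (G * G)) := by
    rw [hp]; unfold rtr
    rw [Matrix.trace_mul_comm, ← mul_assoc, Matrix.trace_mul_comm]
  have hρ1 : rtr ρ = 1 := by simp [rtr, hρ.2]
  have hp1 : 1 - ε ≤ p := by
    have a := rtr_mul_nonneg hρT h1GG
    have e1 : rtr ((S + A - ρ) * (1 - G * G)) =
        rtr (S + A) - rtr ((S + A) * (G * G)) - (rtr ρ - rtr (ρ * (G * G))) := by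
      rw [← rtr_sub, ← rtr_sub, ← rtr_sub]
      congr 1
      noncomm_ring
    have e2 : rtr ((S + A) * (G * G)) = rtr S := by
      have e3 : rtr S = rtr (G * (S + A) * G) := by rw [hGTG]
      rw [e3]
      unfold rtr
      rw [Matrix.trace_mul_comm (G * (S + A)), Matrix.trace_mul_comm (S + A), mul_assoc]
    rw [e1, e2, rtr_add, hρ1, ← hpc, ← hε] at a
    linarith
  have hp0 : 0 < p := lt_of_lt_of_le h1 hp1
  have hpG : p ≤ rtr (ρ * G) := by
    have a := rtr_mul_nonneg hρ.1 hGG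
    rw [mul_sub, rtr_sub, ← hpc] at a
    linarith
  have hGρG : (G * ρ * G).PosSemidef := psd_sandwich hG hρ.1
  have hpinv : (0 : ℂ) ≤ ((p⁻¹ : ℝ) : ℂ) := by exact_mod_cast (inv_pos.mpr hp0).le
  set ρ' := ((p⁻¹ : ℝ) : ℂ) • (G * ρ * G) with hρ'
  have hst : IsState ρ' := by
    refine ⟨hGρG.smul hpinv, ?_⟩
    have him : (G * ρ * G).trace = ((p : ℝ) : ℂ) := by
      apply Complex.ext
      · simp [hp, rtr]
      · have := (Complex.le_def.mp hGρG.trace_nonneg).2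
        simpa using this.symm
    rw [hρ', Matrix.trace_smul, him, smul_eq_mul, ← Complex.ofReal_mul, inv_mul_cancel₀ hp0.ne']
    simp
  have hfid : p ≤ fidelity ρ ρ' := by
    rw [hρ', fidelity_sandwich hρ.1 hG p hp0, le_div_iff₀ hp0, ← sq]
    exact pow_le_pow_left₀ hp0.le hpG 2
  have hsine : sineDist ρ ρ' ≤ Real.sqrt ε := by
    unfold sineDist
    exact Real.sqrt_le_sqrt (by linarith)
  refine (iInf₂_le ρ' ⟨hst, hsine⟩).trans ?_
  refine sInf_le ⟨_, rfl, ?_⟩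
  have h2 : (2:ℝ) ^ (lam - Real.logb 2 (1 - ε)) = μ / (1 - ε) := by
    rw [Real.rpow_sub two_pos, Real.rpow_logb two_pos (by norm_num) h1]
  rw [h2]
  unfold loewnerLE
  have e : (((μ / (1 - ε) : ℝ) : ℂ)) • σ - ρ' =
      ((μ / (1 - ε) - μ / p : ℝ) : ℂ) • σ + ((p⁻¹ : ℝ) : ℂ) • (G * (S + A - ρ) * G) := by
    rw [mul_sub, sub_mul, hGTG, smul_sub, ← hρ', hS, smul_smul, ← add_sub_assoc, ← add_smul]
    congr 2
    push_cast
    ring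
  rw [e]
  refine (hσ.1.smul ?_).add ((psd_sandwich hG hρT).smul hpinv)
  have : 0 ≤ μ / (1 - ε) - μ / p := sub_nonneg.mpr (div_le_div_of_nonneg_left hμ0.le h1 hp1)
  exact_mod_cast this

end QCD
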